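/- Let 0 < r ≤ 1 and let N > ν/r. Let κ ≥ 1 and let δ = diag(δ_1,…,δ_d) be a diagonal matrix for which there exists t > 0 with κ^{−1} t^{a_i} ≤ δ_i ≤ κ t^{a_i} for all i. For n ∈ ℕ₀^d set U(n) := { y ∈ ℝ^d : |δ y − π(n + (1/2,…,1/2))|_a < 1 }. Then there exists a constant C, depending only on a, d, r, N and κ (in particular independent of δ and t), such that for every sequence of nonnegative reals (s_n)_{n∈ℕ₀^d} and every z ∈ ℝ^d: ∑_{n∈ℕ₀^d} s_n (1 + |δ z − π(n + (1/2,…,1/2))|_a)^{−N} ≤ C · M_r( ∑_{n∈ℕ₀^d} s_n 𝟙_{U(n)} )(z). -/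

import Mathlib

open MeasureTheory
open scoped ENNReal

noncomputable section

/-- The Euclidean norm on `ℝ^d`. -/
def euclNorm {d : ℕ} (x : Fin d → ℝ) : ℝ := Real.sqrt (∑ i, (x i) ^ 2)

/-- The anisotropic dilation `t^{-a} x`. -/
def aDilNeg {d : ℕ} (a : Fin d → ℝ) (t : ℝ) (x : Fin d → ℝ) : Fin d → ℝ :=
  fun i => t ^ (-(a i)) * x i

/-- `nrm` is the anisotropic quasi-norm `|·|_a`. -/
def IsAnisoNorm {d : ℕ} (a : Fin d → ℝ) (nrm : (Fin d → ℝ) → ℝ) : Prop :=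
  nrm 0 = 0 ∧ ∀ x : Fin d → ℝ, x ≠ 0 → 0 < nrm x ∧ euclNorm (aDilNeg a (nrm x) x) = 1

/-- The anisotropic (uncentered) maximal function
`M_θ f(x) = sup { (|B|⁻¹ ∫_B |f|^θ)^{1/θ} : B an anisotropic ball containing x }`,
with values in `ℝ≥0∞`. -/
def maxFn {d : ℕ} (nrm : (Fin d → ℝ) → ℝ) (θ : ℝ) (f : (Fin d → ℝ) → ℝ)
    (x : Fin d → ℝ) : ℝ≥0∞ :=
  ⨆ (z : Fin d → ℝ) (r : ℝ) (_ : 0 < r ∧ nrm (fun i => z i - x i) < r),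
    ((∫⁻ y in {y : Fin d → ℝ | nrm (fun i => z i - y i) < r},
        ENNReal.ofReal (|f y| ^ θ)) /
      volume {y : Fin d → ℝ | nrm (fun i => z i - y i) < r}) ^ (1 / θ)

/-!
The power `r ≤ 1` is subadditive, so it suffices to bound `∑ n, (1 + ρ n) ^ (-(N * r)) * s n ^ r`,
where `ρ n` is the anisotropic distance from `δ z` to the `n`-th centre. The cells `U(n)` are
disjoint, and each contains a box of volume comparable to `∏ i, (δ i)⁻¹`. The boxes with `ρ n < T`
all lie in a ball of radius `≍ T / t` around `z`, whose volume is `≍ T ^ ν * ∏ i, (δ i)⁻¹`;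
averaging over this ball shows that the corresponding part of `∑ n, s n ^ r` is
`≲ T ^ ν * (M_r f z) ^ r`, where `f` is the step function `∑ n, s n 𝟙_{U(n)}`. Taking `T = 2 ^ k`
and summing over `k` gives a geometric series of ratio `2 ^ (ν - N * r) < 1`.
-/

section Series

variable {ι : Type*}

lemma rpow_tsum_le_tsum_rpow (x : ι → ℝ≥0∞) {r : ℝ} (hr0 : 0 < r) (hr1 : r ≤ 1) :
    (∑' n, x n) ^ r ≤ ∑' n, x n ^ r := by
  rw [← ENNReal.le_rpow_inv_iff hr0, ENNReal.tsum_eq_iSup_sum]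
  refine iSup_le fun S => (ENNReal.le_rpow_inv_iff hr0).2 ?_
  calc (∑ n ∈ S, x n) ^ r ≤ ∑ n ∈ S, x n ^ r :=
        Finset.le_sum_of_subadditive (· ^ r) (ENNReal.zero_rpow_of_pos hr0).le
          (fun x y => ENNReal.rpow_add_le_add_rpow x y hr0.le hr1) S x
    _ ≤ ∑' n, x n ^ r := ENNReal.sum_le_tsum S

lemma exists_lt_two_pow_and_two_pow_le {x : ℝ} (hx : 0 ≤ x) :
    ∃ k : ℕ, x < 2 ^ k ∧ (2 : ℝ) ^ k ≤ 2 * (1 + x) := by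
  obtain ⟨k, hk, hk'⟩ := exists_nat_pow_near (le_add_of_nonneg_right hx) one_lt_two
  exact ⟨k + 1, by linarith, by rw [pow_succ']; gcongr⟩

lemma tsum_ofReal_mul_geometric {b q : ℝ} (hb : 0 ≤ b) (hq0 : 0 ≤ q) (hq1 : q < 1) :
    ∑' k : ℕ, ENNReal.ofReal (b * q ^ k) = ENNReal.ofReal (b * (1 - q)⁻¹) := by
  rw [← ENNReal.ofReal_tsum_of_nonneg (fun k => by positivity)
    ((summable_geometric_of_lt_one hq0 hq1).mul_left b), tsum_mul_left,
    tsum_geometric_of_lt_one hq0 hq1]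

lemma ofReal_one_add_rpow_neg_mul_le_tsum {ρ : ι → ℝ} (hρ : ∀ n, 0 ≤ ρ n) (g : ι → ℝ≥0∞)
    {L : ℝ} (hL : 0 ≤ L) (n : ι) :
    ENNReal.ofReal ((1 + ρ n) ^ (-L)) * g n ≤
      ∑' k : ℕ, ENNReal.ofReal (2 ^ L * (2 ^ k) ^ (-L)) * {m | ρ m < 2 ^ k}.indicator g n := by
  obtain ⟨k, hk, hk'⟩ := exists_lt_two_pow_and_two_pow_le (hρ n)
  have h1ρ : 0 < 1 + ρ n := by linarith [hρ n]
  refine le_trans ?_ (ENNReal.le_tsum k)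
  rw [Set.indicator_of_mem (by exact hk)]
  gcongr
  calc (1 + ρ n) ^ (-L) = 2 ^ L * (2 * (1 + ρ n)) ^ (-L) := by
        rw [Real.mul_rpow zero_le_two h1ρ.le, ← mul_assoc, ← Real.rpow_add two_pos,
          add_neg_cancel, Real.rpow_zero, one_mul]
    _ ≤ 2 ^ L * (2 ^ k) ^ (-L) := by
        gcongr ?_ * ?_
        exact Real.rpow_le_rpow_of_nonpos (by positivity) hk' (neg_nonpos.2 hL)

lemma ofReal_mul_one_add_rpow_neg_rpow {x ρ r : ℝ} (hx : 0 ≤ x) (hρ : 0 ≤ ρ) (N : ℝ)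
    (hr : 0 ≤ r) :
    ENNReal.ofReal (x * (1 + ρ) ^ (-N)) ^ r =
      ENNReal.ofReal ((1 + ρ) ^ (-(N * r))) * ENNReal.ofReal (x ^ r) := by
  rw [ENNReal.ofReal_rpow_of_nonneg (by positivity) hr, Real.mul_rpow hx (by positivity),
    ← Real.rpow_mul (by positivity), neg_mul, mul_comm, ENNReal.ofReal_mul (by positivity)]

lemma tsum_one_add_rpow_neg_mul_le_of_growth {ρ : ι → ℝ} (hρ : ∀ n, 0 ≤ ρ n) {g : ι → ℝ≥0∞}
    {A : ℝ≥0∞} {ν L : ℝ} (hL : 0 ≤ L) (hνL : ν < L)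
    (hgrowth : ∀ T : ℝ, 1 ≤ T → ∑' n : {n // ρ n < T}, g n ≤ ENNReal.ofReal (T ^ ν) * A) :
    ∑' n, ENNReal.ofReal ((1 + ρ n) ^ (-L)) * g n ≤
      ENNReal.ofReal (2 ^ L * (1 - 2 ^ (ν - L))⁻¹) * A := by
  have hq1 : (2 : ℝ) ^ (ν - L) < 1 :=
    Real.rpow_lt_one_of_one_lt_of_neg one_lt_two (sub_neg.2 hνL)
  have hshell (k : ℕ) :
      ENNReal.ofReal (2 ^ L * (2 ^ k) ^ (-L)) * ∑' n, {m | ρ m < 2 ^ k}.indicator g n ≤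
        ENNReal.ofReal (2 ^ L * (2 ^ (ν - L)) ^ k) * A := by
    rw [← tsum_subtype]
    calc ENNReal.ofReal (2 ^ L * (2 ^ k) ^ (-L)) * ∑' n : {n // ρ n < 2 ^ k}, g n
        ≤ ENNReal.ofReal (2 ^ L * (2 ^ k) ^ (-L)) * (ENNReal.ofReal ((2 ^ k) ^ ν) * A) := by
          gcongr
          exact hgrowth _ (one_le_pow₀ one_le_two)
      _ = ENNReal.ofReal (2 ^ L * (2 ^ (ν - L)) ^ k) * A := by
          rw [← mul_assoc, ← ENNReal.ofReal_mul (by positivity), mul_assoc,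
            ← Real.rpow_add (by positivity), neg_add_eq_sub, Real.rpow_pow_comm zero_le_two]
  calc ∑' n, ENNReal.ofReal ((1 + ρ n) ^ (-L)) * g n
      ≤ ∑' n, ∑' k : ℕ, ENNReal.ofReal (2 ^ L * (2 ^ k) ^ (-L)) *
          {m | ρ m < 2 ^ k}.indicator g n :=
        ENNReal.tsum_le_tsum (ofReal_one_add_rpow_neg_mul_le_tsum hρ g hL)
    _ = ∑' k : ℕ, ENNReal.ofReal (2 ^ L * (2 ^ k) ^ (-L)) *
          ∑' n, {m | ρ m < 2 ^ k}.indicator g n := by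
        rw [ENNReal.tsum_comm]
        simp only [ENNReal.tsum_mul_left]
    _ ≤ ∑' k : ℕ, ENNReal.ofReal (2 ^ L * (2 ^ (ν - L)) ^ k) * A := ENNReal.tsum_le_tsum hshell
    _ = ENNReal.ofReal (2 ^ L * (1 - 2 ^ (ν - L))⁻¹) * A := by
        rw [ENNReal.tsum_mul_right, tsum_ofReal_mul_geometric (by positivity) (by positivity) hq1]

end Series

section DisjointFamilies

open scoped Function

variable {α ι : Type*}

lemma tsum_mul_indicator_one_eq_of_mem {E : ι → Set α} (hE : Pairwise (Disjoint on E)) (s : ι → ℝ)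
    {n : ι} {y : α} (hy : y ∈ E n) :
    ∑' m, s m * (E m).indicator (fun _ => (1 : ℝ)) y = s n := by
  rw [tsum_eq_single n, Set.indicator_of_mem hy, mul_one]
  intro m hmn
  rw [Set.indicator_of_notMem ((hE hmn).notMem_of_mem_right hy), mul_zero]

lemma tsum_setLIntegral_le_of_pairwise_disjoint [MeasurableSpace α] {μ : Measure α}
    {E : ι → Set α} {B : Set α} (hmeas : ∀ n, MeasurableSet (E n))
    (hdisj : Pairwise (Disjoint on E)) (hsub : ∀ n, E n ⊆ B) (g : α → ℝ≥0∞) :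
    ∑' n, ∫⁻ y in E n, g y ∂μ ≤ ∫⁻ y in B, g y ∂μ := by
  have hE (n : ι) : (μ.restrict B).withDensity g (E n) = ∫⁻ y in E n, g y ∂μ := by
    rw [withDensity_apply _ (hmeas n), Measure.restrict_restrict_of_subset (hsub n)]
  calc ∑' n, ∫⁻ y in E n, g y ∂μ = ∑' n, (μ.restrict B).withDensity g (E n) := by simp only [hE]
    _ ≤ (μ.restrict B).withDensity g Set.univ :=
        tsum_measure_le_measure_univ (fun n => (hmeas n).nullMeasurableSet)
          fun _ _ h => (hdisj h).aedisjoint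
    _ = ∫⁻ y in B, g y ∂μ := by rw [withDensity_apply _ MeasurableSet.univ, Measure.restrict_univ]

end DisjointFamilies

section OpenBox

variable {ι : Type*}

/-- The open axis-parallel box with centre `c` and half-side lengths `ρ`. -/
def openBox (c ρ : ι → ℝ) : Set (ι → ℝ) :=
  Set.univ.pi fun i => Metric.ball (c i) (ρ i)

lemma mem_openBox {c ρ y : ι → ℝ} : y ∈ openBox c ρ ↔ ∀ i, |y i - c i| < ρ i := by
  simp only [openBox, Set.mem_univ_pi, Metric.mem_ball, Real.dist_eq]

lemma measurableSet_openBox [Countable ι] (c ρ : ι → ℝ) : MeasurableSet (openBox c ρ) :=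
  .univ_pi fun _ => measurableSet_ball

lemma volume_openBox [Fintype ι] (c : ι → ℝ) {ρ : ι → ℝ} (hρ : ∀ i, 0 ≤ ρ i) :
    volume (openBox c ρ) = ENNReal.ofReal (∏ i, 2 * ρ i) := by
  rw [openBox, volume_pi_pi, ENNReal.ofReal_prod_of_nonneg fun i _ => by have := hρ i; positivity]
  simp only [Real.volume_ball]

end OpenBox

lemma exists_pos_forall_le_rpow {ι : Type*} [Finite ι] {a : ι → ℝ} (ha : ∀ i, 0 < a i) (b : ℝ) :
    ∃ c : ℝ, 0 < c ∧ ∀ i, b ≤ c ^ a i :=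
  ((Filter.eventually_gt_atTop 0).and <| Filter.eventually_all.2 fun i =>
    (tendsto_rpow_atTop (ha i)).eventually_ge_atTop b).exists

section AnisotropicGeometry

open scoped Function

variable {d : ℕ} {a : Fin d → ℝ} {nrm : (Fin d → ℝ) → ℝ}

namespace IsAnisoNorm

lemma nonneg (hnrm : IsAnisoNorm a nrm) (x : Fin d → ℝ) : 0 ≤ nrm x := by
  by_cases hx : x = 0
  · rw [hx, hnrm.1]
  · exact (hnrm.2 x hx).1.le

lemma sum_sq_div_rpow_eq_one (hnrm : IsAnisoNorm a nrm) {x : Fin d → ℝ} (hx : x ≠ 0) :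
    ∑ i, (x i / nrm x ^ a i) ^ 2 = 1 := by
  obtain ⟨hpos, hone⟩ := hnrm.2 x hx
  rw [euclNorm, Real.sqrt_eq_one] at hone
  simpa only [aDilNeg, Real.rpow_neg hpos.le, inv_mul_eq_div] using hone

lemma abs_apply_lt_rpow (hnrm : IsAnisoNorm a nrm) {i : Fin d} (hi : 0 < a i) {x : Fin d → ℝ}
    {T : ℝ} (hx : nrm x < T) : |x i| < T ^ a i := by
  refine lt_of_le_of_lt ?_ (Real.rpow_lt_rpow (hnrm.nonneg x) hx hi)
  rcases eq_or_ne x 0 with rfl | hx0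
  · simpa using Real.rpow_nonneg (hnrm.nonneg 0) (a i)
  have hpos : 0 < nrm x ^ a i := Real.rpow_pos_of_pos (hnrm.2 x hx0).1 _
  have hsq : (x i / nrm x ^ a i) ^ 2 ≤ 1 := hnrm.sum_sq_div_rpow_eq_one hx0 ▸
    Finset.single_le_sum (fun j _ => sq_nonneg (x j / nrm x ^ a j)) (Finset.mem_univ i)
  rwa [sq_le_one_iff_abs_le_one, abs_div, abs_of_pos hpos, div_le_one hpos] at hsq

lemma lt_of_forall_abs_lt_rpow_div (hnrm : IsAnisoNorm a nrm) (ha : ∀ i, 0 ≤ a i)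
    {x : Fin d → ℝ} {T : ℝ} (hT : 0 < T) (hx : ∀ i, |x i| < T ^ a i / d) : nrm x < T := by
  by_contra! hTx
  have hx0 : x ≠ 0 := by
    rintro rfl
    exact hT.not_ge (hnrm.1 ▸ hTx)
  obtain ⟨j, -⟩ := Function.ne_iff.1 hx0
  have hd : (1 : ℝ) ≤ d := by exact_mod_cast Fin.pos j
  have hsq (i : Fin d) : (x i / nrm x ^ a i) ^ 2 < (d : ℝ)⁻¹ := by
    have hpos : 0 < nrm x ^ a i := Real.rpow_pos_of_pos (hT.trans_le hTx) _
    have habs : |x i / nrm x ^ a i| < (d : ℝ)⁻¹ := by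
      rw [abs_div, abs_of_pos hpos, div_lt_iff₀ hpos, inv_mul_eq_div]
      exact (hx i).trans_le (by gcongr; exact ha i)
    calc (x i / nrm x ^ a i) ^ 2 = |x i / nrm x ^ a i| ^ 2 := (sq_abs _).symm
      _ ≤ |x i / nrm x ^ a i| :=
          pow_le_of_le_one (abs_nonneg _) (habs.le.trans (inv_le_one_of_one_le₀ hd)) two_ne_zero
      _ < (d : ℝ)⁻¹ := habs
  have hsum : ∑ i, (x i / nrm x ^ a i) ^ 2 < ∑ _i : Fin d, (d : ℝ)⁻¹ :=
    Finset.sum_lt_sum_of_nonempty ⟨j, Finset.mem_univ j⟩ fun i _ => hsq i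
  rw [hnrm.sum_sq_div_rpow_eq_one hx0, Finset.sum_const, Finset.card_fin, nsmul_eq_mul,
    mul_inv_cancel₀ (by positivity)] at hsum
  exact lt_irrefl _ hsum

end IsAnisoNorm

/-- The anisotropic ball over which `maxFn` averages. -/
def anisoBall (nrm : (Fin d → ℝ) → ℝ) (z : Fin d → ℝ) (R : ℝ) : Set (Fin d → ℝ) :=
  {y | nrm (z - y) < R}

/-- The set of points that the diagonal matrix `δ` maps into the unit anisotropic ball around `p`.
For `p = π (n + (1/2, …, 1/2))` this is `U(n)`. -/
def anisoCell (nrm : (Fin d → ℝ) → ℝ) (δ p : Fin d → ℝ) : Set (Fin d → ℝ) :=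
  {y | nrm (δ * y - p) < 1}

/-- A box inscribed in `anisoCell nrm δ p`; half-side `1 / d` before rescaling by `δ` makes it fit
into the Euclidean unit ball. -/
def coreBox (δ p : Fin d → ℝ) : Set (Fin d → ℝ) :=
  openBox (fun i => p i / δ i) fun i => (d * δ i)⁻¹

lemma mem_coreBox {δ : Fin d → ℝ} (hδ : ∀ i, 0 < δ i) {p y : Fin d → ℝ} :
    y ∈ coreBox δ p ↔ ∀ i, |δ i * y i - p i| < (d : ℝ)⁻¹ := by
  refine mem_openBox.trans (forall_congr' fun i => ?_)
  have hrescale : δ i * y i - p i = δ i * (y i - p i / δ i) := by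
    have := hδ i
    field_simp
  rw [hrescale, abs_mul, abs_of_pos (hδ i), mul_inv, ← div_eq_mul_inv, lt_div_iff₀' (hδ i)]

lemma volume_coreBox {δ : Fin d → ℝ} (hδ : ∀ i, 0 ≤ δ i) (p : Fin d → ℝ) :
    volume (coreBox δ p) = ENNReal.ofReal (∏ i, 2 * (d * δ i)⁻¹) :=
  volume_openBox _ fun i => by have := hδ i; positivity

lemma volume_coreBox_pos {δ : Fin d → ℝ} (hδ : ∀ i, 0 < δ i) (p : Fin d → ℝ) :
    0 < volume (coreBox δ p) := by
  rw [volume_coreBox (fun i => (hδ i).le), ENNReal.ofReal_pos]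
  refine Finset.prod_pos fun i _ => ?_
  have hd : (0 : ℝ) < d := by exact_mod_cast Fin.pos i
  have := hδ i
  positivity

lemma volume_coreBox_ne_top {δ : Fin d → ℝ} (hδ : ∀ i, 0 ≤ δ i) (p : Fin d → ℝ) :
    volume (coreBox δ p) ≠ ∞ :=
  volume_coreBox hδ p ▸ ENNReal.ofReal_ne_top

lemma coreBox_subset_anisoCell (hnrm : IsAnisoNorm a nrm) (ha : ∀ i, 0 ≤ a i) {δ : Fin d → ℝ}
    (hδ : ∀ i, 0 < δ i) (p : Fin d → ℝ) : coreBox δ p ⊆ anisoCell nrm δ p := fun y hy =>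
  hnrm.lt_of_forall_abs_lt_rpow_div ha one_pos fun i => by
    simpa only [Real.one_rpow, one_div] using! (mem_coreBox hδ).1 hy i

lemma anisoBall_subset_openBox (hnrm : IsAnisoNorm a nrm) (ha : ∀ i, 0 < a i) (z : Fin d → ℝ)
    (R : ℝ) : anisoBall nrm z R ⊆ openBox z fun i => R ^ a i := fun y hy =>
  mem_openBox.2 fun i => abs_sub_comm (z i) (y i) ▸ hnrm.abs_apply_lt_rpow (ha i) hy

lemma volume_anisoBall_le (hnrm : IsAnisoNorm a nrm) (ha : ∀ i, 0 < a i) (z : Fin d → ℝ) {R : ℝ}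
    (hR : 0 ≤ R) : volume (anisoBall nrm z R) ≤ ENNReal.ofReal (∏ i, 2 * R ^ a i) :=
  (measure_mono (anisoBall_subset_openBox hnrm ha z R)).trans_eq
    (volume_openBox z fun _ => Real.rpow_nonneg hR _)

lemma volume_anisoBall_ne_top (hnrm : IsAnisoNorm a nrm) (ha : ∀ i, 0 < a i) (z : Fin d → ℝ)
    {R : ℝ} (hR : 0 ≤ R) : volume (anisoBall nrm z R) ≠ ∞ :=
  ne_top_of_le_ne_top ENNReal.ofReal_ne_top (volume_anisoBall_le hnrm ha z hR)

lemma coreBox_subset_anisoBall (hnrm : IsAnisoNorm a nrm) (ha : ∀ i, 0 < a i) {κ c t T : ℝ}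
    (hκ : 0 < κ) (hc0 : 0 < c) (hc : ∀ i, 2 * κ * d ≤ c ^ a i) (ht : 0 < t) (hT : 1 ≤ T)
    {δ : Fin d → ℝ} (hδ : ∀ i, κ⁻¹ * t ^ a i ≤ δ i) {p z : Fin d → ℝ}
    (hz : nrm (δ * z - p) < T) : coreBox δ p ⊆ anisoBall nrm z (c * T / t) := by
  have hT0 : 0 < T := one_pos.trans_le hT
  have hδ0 (i : Fin d) : 0 < δ i := lt_of_lt_of_le (by positivity) (hδ i)
  refine fun y hy => hnrm.lt_of_forall_abs_lt_rpow_div (fun i => (ha i).le) (by positivity)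
    fun i => ?_
  have hd : (1 : ℝ) ≤ d := by exact_mod_cast Fin.pos i
  have hzp : |δ i * z i - p i| < T ^ a i := hnrm.abs_apply_lt_rpow (ha i) hz
  have hyp : |δ i * y i - p i| < T ^ a i := ((mem_coreBox hδ0).1 hy i).trans_le <|
    (inv_le_one_of_one_le₀ hd).trans (Real.one_le_rpow hT (ha i).le)
  have hδzy : δ i * |z i - y i| < 2 * T ^ a i := by
    calc δ i * |z i - y i| = |(δ i * z i - p i) - (δ i * y i - p i)| := by
          rw [sub_sub_sub_cancel_right, ← mul_sub, abs_mul, abs_of_pos (hδ0 i)]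
      _ ≤ |δ i * z i - p i| + |δ i * y i - p i| := abs_sub _ _
      _ < 2 * T ^ a i := by linarith
  calc |z i - y i| < 2 * T ^ a i / δ i := (lt_div_iff₀' (hδ0 i)).2 hδzy
    _ ≤ 2 * T ^ a i / (κ⁻¹ * t ^ a i) := by gcongr; exact hδ i
    _ = 2 * κ * d * T ^ a i / t ^ a i / d := by field_simp
    _ ≤ c ^ a i * T ^ a i / t ^ a i / d := by gcongr; exact hc i
    _ = (c * T / t) ^ a i / d := by
        rw [Real.div_rpow (by positivity) ht.le, Real.mul_rpow hc0.le hT0.le]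

lemma prod_two_mul_div_rpow_le {κ t x : ℝ} (ht : 0 < t) (hx : 0 < x) {δ : Fin d → ℝ}
    (hδ0 : ∀ i, 0 < δ i) (hδ : ∀ i, δ i ≤ κ * t ^ a i) :
    ∏ i, 2 * (x / t) ^ a i ≤ (d * κ) ^ d * x ^ (∑ i, a i) * ∏ i, 2 * (d * δ i)⁻¹ := by
  have hconst : (d * κ) ^ d = ∏ _i : Fin d, (d * κ) := by
    rw [Finset.prod_const, Finset.card_fin]
  rw [Real.rpow_sum_of_pos hx, hconst, ← Finset.prod_mul_distrib, ← Finset.prod_mul_distrib]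
  refine Finset.prod_le_prod (fun i _ => by positivity) fun i _ => ?_
  have hd : (0 : ℝ) < d := by exact_mod_cast Fin.pos i
  have hδi := hδ0 i
  have hinv : (t ^ a i)⁻¹ ≤ κ * (δ i)⁻¹ := by
    rw [← div_eq_mul_inv, le_div_iff₀ hδi, inv_mul_le_iff₀ (by positivity), mul_comm]
    exact hδ i
  calc 2 * (x / t) ^ a i = 2 * x ^ a i * (t ^ a i)⁻¹ := by
        rw [Real.div_rpow hx.le ht.le, div_eq_mul_inv, mul_assoc]
    _ ≤ 2 * x ^ a i * (κ * (δ i)⁻¹) := by gcongr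
    _ = d * κ * x ^ a i * (2 * (d * δ i)⁻¹) := by field_simp

lemma volume_anisoBall_div_le_mul_volume_coreBox (hnrm : IsAnisoNorm a nrm) (ha : ∀ i, 0 < a i)
    {κ t x : ℝ} (ht : 0 < t) (hx : 0 < x) {δ : Fin d → ℝ} (hδ0 : ∀ i, 0 < δ i)
    (hδ : ∀ i, δ i ≤ κ * t ^ a i) (z p : Fin d → ℝ) :
    volume (anisoBall nrm z (x / t)) ≤
      ENNReal.ofReal ((d * κ) ^ d * x ^ (∑ i, a i)) * volume (coreBox δ p) := by
  have hprod : 0 ≤ ∏ i, 2 * (d * δ i)⁻¹ :=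
    Finset.prod_nonneg fun i _ => by have := hδ0 i; positivity
  rw [volume_coreBox (fun i => (hδ0 i).le), ← ENNReal.ofReal_mul' hprod]
  exact (volume_anisoBall_le hnrm ha z (by positivity)).trans
    (ENNReal.ofReal_le_ofReal (prod_two_mul_div_rpow_le ht hx hδ0 hδ))

lemma disjoint_anisoCell_of_two_le_abs_sub (hnrm : IsAnisoNorm a nrm) {i : Fin d}
    (hi : 0 < a i) (δ : Fin d → ℝ) {p q : Fin d → ℝ} (hpq : 2 ≤ |p i - q i|) :
    Disjoint (anisoCell nrm δ p) (anisoCell nrm δ q) := by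
  refine Set.disjoint_left.2 fun y hyp hyq => hpq.not_gt ?_
  have hp : |δ i * y i - p i| < 1 := by
    simpa only [Real.one_rpow] using! hnrm.abs_apply_lt_rpow hi hyp
  have hq : |δ i * y i - q i| < 1 := by
    simpa only [Real.one_rpow] using! hnrm.abs_apply_lt_rpow hi hyq
  calc |p i - q i| = |(δ i * y i - q i) - (δ i * y i - p i)| := by rw [sub_sub_sub_cancel_left]
    _ ≤ |δ i * y i - q i| + |δ i * y i - p i| := abs_sub _ _
    _ < 2 := by linarith

lemma pairwise_disjoint_anisoCell_pi_mul_add_half (hnrm : IsAnisoNorm a nrm) (ha : ∀ i, 0 < a i)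
    (δ : Fin d → ℝ) :
    Pairwise (Disjoint on fun n : Fin d → ℕ =>
      anisoCell nrm δ fun i => Real.pi * ((n i : ℝ) + 1 / 2)) := by
  intro m n hmn
  obtain ⟨i, hi⟩ := Function.ne_iff.1 hmn
  have hdist : (1 : ℝ) ≤ |(m i : ℝ) - n i| := Nat.pairwise_one_le_dist hi
  refine disjoint_anisoCell_of_two_le_abs_sub hnrm (ha i) δ ?_
  calc (2 : ℝ) ≤ Real.pi * 1 := by linarith [Real.two_le_pi]
    _ ≤ Real.pi * |(m i : ℝ) - n i| := by gcongr
    _ = |Real.pi * ((m i : ℝ) + 1 / 2) - Real.pi * ((n i : ℝ) + 1 / 2)| := by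
        rw [← mul_sub, add_sub_add_right_eq_sub, abs_mul, abs_of_pos Real.pi_pos]

end AnisotropicGeometry

section MaximalFunction

open scoped Function

variable {d : ℕ} {ι : Type*} {a : Fin d → ℝ} {nrm : (Fin d → ℝ) → ℝ}

lemma lintegral_anisoBall_le_maxFn_rpow_mul {θ R : ℝ} (hθ : 0 < θ) (f : (Fin d → ℝ) → ℝ)
    {x z : Fin d → ℝ} (hR : 0 < R) (hx : x ∈ anisoBall nrm z R)
    (hfin : volume (anisoBall nrm z R) ≠ ∞) :
    ∫⁻ y in anisoBall nrm z R, ENNReal.ofReal (|f y| ^ θ) ≤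
      maxFn nrm θ f x ^ θ * volume (anisoBall nrm z R) := by
  by_cases hnull : volume (anisoBall nrm z R) = 0
  · rw [setLIntegral_measure_zero _ _ hnull]
    exact zero_le
  rw [← ENNReal.div_le_iff hnull hfin, ← ENNReal.rpow_inv_le_iff hθ, ← one_div]
  exact le_iSup_of_le z (le_iSup_of_le R (le_iSup_of_le ⟨hR, hx⟩ le_rfl))

lemma tsum_rpow_mul_le_maxFn_rpow_mul_volume {θ R : ℝ} (hθ : 0 < θ) {f : (Fin d → ℝ) → ℝ}
    {x z : Fin d → ℝ} (hR : 0 < R) (hx : x ∈ anisoBall nrm z R)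
    (hfin : volume (anisoBall nrm z R) ≠ ∞) {E : ι → Set (Fin d → ℝ)} {V : ℝ≥0∞}
    (hmeas : ∀ n, MeasurableSet (E n)) (hdisj : Pairwise (Disjoint on E))
    (hsub : ∀ n, E n ⊆ anisoBall nrm z R) (hV : ∀ n, V ≤ volume (E n)) {s : ι → ℝ}
    (hf : ∀ n, ∀ y ∈ E n, f y = s n) :
    (∑' n, ENNReal.ofReal (|s n| ^ θ)) * V ≤
      maxFn nrm θ f x ^ θ * volume (anisoBall nrm z R) := by
  have hint (n : ι) : ENNReal.ofReal (|s n| ^ θ) * volume (E n) =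
      ∫⁻ y in E n, ENNReal.ofReal (|f y| ^ θ) := by
    rw [← setLIntegral_const]
    exact setLIntegral_congr_fun (hmeas n) fun y hy => by simp only [hf n y hy]
  calc (∑' n, ENNReal.ofReal (|s n| ^ θ)) * V
      = ∑' n, ENNReal.ofReal (|s n| ^ θ) * V := ENNReal.tsum_mul_right.symm
    _ ≤ ∑' n, ENNReal.ofReal (|s n| ^ θ) * volume (E n) :=
        ENNReal.tsum_le_tsum fun n => mul_le_mul_right (hV n) _
    _ = ∑' n, ∫⁻ y in E n, ENNReal.ofReal (|f y| ^ θ) := by simp only [hint]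
    _ ≤ ∫⁻ y in anisoBall nrm z R, ENNReal.ofReal (|f y| ^ θ) :=
        tsum_setLIntegral_le_of_pairwise_disjoint hmeas hdisj hsub _
    _ ≤ maxFn nrm θ f x ^ θ * volume (anisoBall nrm z R) :=
        lintegral_anisoBall_le_maxFn_rpow_mul hθ f hR hx hfin

/-- The step function `∑ n, s n 𝟙_{U(n)}` subordinate to the cells around the centres `p n`. -/
def cellStepFunction (nrm : (Fin d → ℝ) → ℝ) (δ : Fin d → ℝ) (p : ι → Fin d → ℝ) (s : ι → ℝ) :
    (Fin d → ℝ) → ℝ :=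
  fun y => ∑' n, s n * (anisoCell nrm δ (p n)).indicator (fun _ => (1 : ℝ)) y

lemma tsum_rpow_near_le_maxFn_cellStepFunction (hnrm : IsAnisoNorm a nrm) (ha : ∀ i, 0 < a i)
    {r κ c t T : ℝ} (hr : 0 < r) (hκ : 0 < κ) (hc0 : 0 < c) (hc : ∀ i, 2 * κ * d ≤ c ^ a i)
    (ht : 0 < t) (hT : 1 ≤ T) {δ : Fin d → ℝ}
    (hδ : ∀ i, κ⁻¹ * t ^ a i ≤ δ i ∧ δ i ≤ κ * t ^ a i) {p : ι → Fin d → ℝ}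
    (hp : Pairwise (Disjoint on fun n => anisoCell nrm δ (p n))) (s : ι → ℝ) (z : Fin d → ℝ) :
    ∑' n : {n // nrm (δ * z - p n) < T}, ENNReal.ofReal (|s n| ^ r) ≤
      ENNReal.ofReal (T ^ (∑ i, a i)) * (ENNReal.ofReal ((d * κ) ^ d * c ^ (∑ i, a i)) *
        maxFn nrm r (cellStepFunction nrm δ p s) z ^ r) := by
  have hT0 : 0 < T := one_pos.trans_le hT
  have hδ0 (i : Fin d) : 0 < δ i := lt_of_lt_of_le (by positivity) (hδ i).1
  have hcore (n : ι) : coreBox δ (p n) ⊆ anisoCell nrm δ (p n) :=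
    coreBox_subset_anisoCell hnrm (fun i => (ha i).le) hδ0 (p n)
  have hR : 0 < c * T / t := by positivity
  have hz : z ∈ anisoBall nrm z (c * T / t) := by
    simpa only [anisoBall, Set.mem_ofPred_eq, sub_self, hnrm.1] using hR
  have hvolume (q : Fin d → ℝ) : volume (coreBox δ 0) = volume (coreBox δ q) := by
    simp only [volume_coreBox fun i => (hδ0 i).le]
  have haverage := tsum_rpow_mul_le_maxFn_rpow_mul_volume hr (f := cellStepFunction nrm δ p s)
    hR hz (volume_anisoBall_ne_top hnrm ha z hR.le)
    (E := fun n : {n // nrm (δ * z - p n) < T} => coreBox δ (p n))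
    (fun n => measurableSet_openBox _ _)
    (fun m n hmn => (hp (Subtype.coe_ne_coe.2 hmn)).mono (hcore m) (hcore n))
    (fun n => coreBox_subset_anisoBall hnrm ha hκ hc0 hc ht hT (fun i => (hδ i).1) n.2)
    (fun n => (hvolume (p n)).le)
    (fun n y hy => tsum_mul_indicator_one_eq_of_mem hp s (hcore n hy))
  rw [← ENNReal.mul_le_mul_iff_left (volume_coreBox_pos hδ0 0).ne'
    (volume_coreBox_ne_top (fun i => (hδ0 i).le) 0)]
  refine (haverage.trans <| mul_le_mul_right (volume_anisoBall_div_le_mul_volume_coreBox hnrm ha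
    ht (by positivity) hδ0 (fun i => (hδ i).2) z 0) _).trans_eq ?_
  rw [Real.mul_rpow hc0.le hT0.le, ← mul_assoc ((d * κ) ^ d), ENNReal.ofReal_mul (by positivity)]
  ring

theorem stmt17_general (ha : ∀ i, 0 < a i) (hnrm : IsAnisoNorm a nrm) {r N κ : ℝ} (hr0 : 0 < r)
    (hr1 : r ≤ 1) (hN : (∑ i, a i) / r < N) (hκ : 0 < κ) :
    ∃ C : ℝ, 0 < C ∧
      ∀ (δ : Fin d → ℝ) (t : ℝ), 0 < t →
        (∀ i, κ⁻¹ * t ^ a i ≤ δ i ∧ δ i ≤ κ * t ^ a i) →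
        ∀ p : ι → Fin d → ℝ, Pairwise (Disjoint on fun n => anisoCell nrm δ (p n)) →
        ∀ (s : ι → ℝ) (z : Fin d → ℝ),
          ∑' n, ENNReal.ofReal (|s n| * (1 + nrm (δ * z - p n)) ^ (-N)) ≤
            ENNReal.ofReal C * maxFn nrm r (cellStepFunction nrm δ p s) z := by
  obtain ⟨c, hc0, hc⟩ := exists_pos_forall_le_rpow ha (2 * κ * d)
  have hνL : ∑ i, a i < N * r := (div_lt_iff₀ hr0).1 hN
  have hL : 0 ≤ N * r := (Finset.sum_nonneg fun i _ => (ha i).le).trans hνL.le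
  have hdκ : 0 < (d * κ) ^ d := by
    rcases d.eq_zero_or_pos with rfl | hd
    · exact one_pos.trans_eq (pow_zero _).symm
    · positivity
  set K : ℝ := 2 ^ (N * r) * (1 - 2 ^ (∑ i, a i - N * r))⁻¹
  have hK0 : 0 < K := by
    have hgap := sub_pos.2 (Real.rpow_lt_one_of_one_lt_of_neg one_lt_two (sub_neg.2 hνL))
    positivity
  refine ⟨(K * ((d * κ) ^ d * c ^ (∑ i, a i))) ^ r⁻¹, by positivity, fun δ t ht hδ p hp s z => ?_⟩
  have hρ (n : ι) : 0 ≤ nrm (δ * z - p n) := hnrm.nonneg _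
  rw [← ENNReal.ofReal_rpow_of_pos (by positivity), ← ENNReal.rpow_le_rpow_iff hr0,
    ENNReal.mul_rpow_of_nonneg _ _ hr0.le, ENNReal.rpow_inv_rpow hr0.ne']
  calc (∑' n, ENNReal.ofReal (|s n| * (1 + nrm (δ * z - p n)) ^ (-N))) ^ r
      ≤ ∑' n, ENNReal.ofReal (|s n| * (1 + nrm (δ * z - p n)) ^ (-N)) ^ r :=
        rpow_tsum_le_tsum_rpow _ hr0 hr1
    _ = ∑' n, ENNReal.ofReal ((1 + nrm (δ * z - p n)) ^ (-(N * r))) *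
          ENNReal.ofReal (|s n| ^ r) :=
        tsum_congr fun n => ofReal_mul_one_add_rpow_neg_rpow (abs_nonneg _) (hρ n) N hr0.le
    _ ≤ ENNReal.ofReal K * (ENNReal.ofReal ((d * κ) ^ d * c ^ (∑ i, a i)) *
          maxFn nrm r (cellStepFunction nrm δ p s) z ^ r) :=
        tsum_one_add_rpow_neg_mul_le_of_growth hρ hL hνL fun T hT =>
          tsum_rpow_near_le_maxFn_cellStepFunction hnrm ha hr0 hκ hc0 hc ht hT hδ hp s z
    _ = ENNReal.ofReal (K * ((d * κ) ^ d * c ^ (∑ i, a i))) *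
          maxFn nrm r (cellStepFunction nrm δ p s) z ^ r := by
        rw [← mul_assoc, ← ENNReal.ofReal_mul hK0.le]

end MaximalFunction

/-- key estimate in Lemma B.2: for `0 < r ≤ 1`, `N > ν/r`, `κ ≥ 1`, and a
diagonal matrix `δ` with `κ⁻¹ t^{a_i} ≤ δ_i ≤ κ t^{a_i}` for some `t > 0`, one has,
uniformly in `δ`, `t`, the nonnegative sequence `(s_n)` and `z ∈ ℝ^d`:
`∑_n s_n (1 + |δz − π(n+½)|_a)^{−N} ≤ C · M_r(∑_n s_n 𝟙_{U(n)})(z)`,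
with `U(n) = {y : |δy − π(n+½)|_a < 1}`. -/
theorem stmt17 (d : ℕ) (hd : 1 ≤ d) (a : Fin d → ℝ) (ha : ∀ i, 1 ≤ a i)
    (nrm : (Fin d → ℝ) → ℝ) (hnrm : IsAnisoNorm a nrm)
    (r N κ : ℝ) (hr0 : 0 < r) (hr1 : r ≤ 1) (hN : (∑ i, a i) / r < N) (hκ : 1 ≤ κ) :
    ∃ C : ℝ, 0 < C ∧
      ∀ (δ : Fin d → ℝ) (t : ℝ), 0 < t →
        (∀ i, κ⁻¹ * t ^ (a i) ≤ δ i ∧ δ i ≤ κ * t ^ (a i)) →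
        ∀ s : (Fin d → ℕ) → ℝ, (∀ n, 0 ≤ s n) →
        ∀ z : Fin d → ℝ,
          (∑' n : Fin d → ℕ,
              ENNReal.ofReal (s n *
                (1 + nrm (fun i => δ i * z i - Real.pi * ((n i : ℝ) + 1 / 2))) ^ (-N))) ≤
            ENNReal.ofReal C *
              maxFn nrm r
                (fun y => ∑' n : Fin d → ℕ,
                  s n * ({y' : Fin d → ℝ |
                      nrm (fun i => δ i * y' i - Real.pi * ((n i : ℝ) + 1 / 2)) < 1}).indicator
                    (fun _ => (1 : ℝ)) y) z := by
  have ha0 (i : Fin d) : 0 < a i := one_pos.trans_le (ha i)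
  obtain ⟨C, hC, hbound⟩ := stmt17_general ha0 hnrm hr0 hr1 hN (one_pos.trans_le hκ)
  refine ⟨C, hC, fun δ t ht hδ s hs z => ?_⟩
  simpa only [abs_of_nonneg (hs _)] using!
    hbound δ t ht hδ _ (pairwise_disjoint_anisoCell_pi_mul_add_half hnrm ha0 δ) s z
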